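/- Assume the cocycle f is convolution invertible, i.e. there exists f^{-1} ∈ Hom_k(H⊗H, A) with f * f^{-1} = f^{-1} * f = ε⊗ε·1_A in the convolution algebra. Then the map γ : H → E given by γ(h) = 1#h is convolution invertible in Hom_k(H,E), with convolution inverse γ^{-1}(h) = (1#h)^{-1} = f^{-1}(S(h^{(2)}), h^{(3)}) # S(h^{(1)}), i.e. γ(h^{(1)})γ^{-1}(h^{(2)}) = γ^{-1}(h^{(1)})γ(h^{(2)}) = ε(h)·1#1 for all h ∈ H. -/

import Mathlib

open TensorProduct

noncomputable section

namespace HopfCrossed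

variable (k : Type) [CommRing k]

def TpowCat (V : ModuleCat k) : ℕ → ModuleCat k
  | 0 => ModuleCat.of k k
  | n + 1 => ModuleCat.of k (V ⊗[k] (TpowCat V n))

abbrev Tpow (V : Type) [AddCommGroup V] [Module k V] (n : ℕ) : Type :=
  TpowCat k (ModuleCat.of k V) n

def tp {V : Type} [AddCommGroup V] [Module k V] : ∀ {n : ℕ}, (Fin n → V) → Tpow k V n
  | 0, _ => (1 : k)
  | _ + 1, v => (v 0) ⊗ₜ[k] (tp fun i => v i.succ)

section Coalg
variable {H : Type} [AddCommGroup H] [Module k H]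

def itComul [Coalgebra k H] : ∀ n : ℕ, H →ₗ[k] Tpow k H (n + 1)
  | 0 => (TensorProduct.rid k H).symm.toLinearMap
  | n + 1 =>
      (TensorProduct.map LinearMap.id (itComul n)) ∘ₗ (Coalgebra.comul (R := k))

def SRep [Coalgebra k H] (n : ℕ) (h : H) (N : ℕ) (u : Fin N → Fin (n + 1) → H) : Prop :=
  itComul k n h = ∑ i, tp k (u i)

def iterAct {A : Type} [AddCommGroup A] [Module k A]
    (act : H →ₗ[k] A →ₗ[k] A) : ∀ {s : ℕ}, (Fin s → H) → A → A
  | 0, _, a => a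
  | _ + 1, h, a => act (h 0) (iterAct act (fun i => h i.succ) a)

end Coalg

/-- A weak action of a Hopf algebra `H` on a `k`-algebra `A` (Blattner–Cohen–Montgomery,
Doi–Takeuchi), written `act h a = a^h`. -/
structure WeakAction (k A H : Type) [CommRing k] [Ring A] [Algebra k A] [Ring H] [HopfAlgebra k H] : Type where
  act : H →ₗ[k] A →ₗ[k] A
  act_mul : ∀ (h : H) (a b : A) (N : ℕ) (u : Fin N → Fin 2 → H), SRep k 1 h N u →
    act h (a * b) = ∑ i, act (u i 0) a * act (u i 1) b
  act_one : ∀ h : H, act h 1 = Coalgebra.counit (R := k) h • (1 : A)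
  one_act : ∀ a : A, act 1 a = a

variable {A H : Type} [Ring A] [Algebra k A] [Ring H] [HopfAlgebra k H]
variable {k}

/-- Normality of the cocycle `f`. -/
def IsNormal (f : H →ₗ[k] H →ₗ[k] A) : Prop :=
  ∀ h : H, f h 1 = Coalgebra.counit (R := k) h • (1 : A) ∧
    f 1 h = Coalgebra.counit (R := k) h • (1 : A)

/-- The cocycle condition
`f(l⁽¹⁾,m⁽¹⁾)^{h⁽¹⁾} f(h⁽²⁾, l⁽²⁾m⁽²⁾) = f(h⁽¹⁾,l⁽¹⁾) f(h⁽²⁾l⁽²⁾, m)`. -/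
def IsCocycle (W : WeakAction k A H) (f : H →ₗ[k] H →ₗ[k] A) : Prop :=
  ∀ (h l m : H) (N₁ N₂ N₃ : ℕ) (u : Fin N₁ → Fin 2 → H) (v : Fin N₂ → Fin 2 → H)
    (w : Fin N₃ → Fin 2 → H),
    SRep k 1 h N₁ u → SRep k 1 l N₂ v → SRep k 1 m N₃ w →
    (∑ i, ∑ j, ∑ p, W.act (u i 0) (f (v j 0) (w p 0)) * f (u i 1) (v j 1 * w p 1)) =
      ∑ i, ∑ j, f (u i 0) (v j 0) * f (u i 1 * v j 1) m

/-- The twisted module condition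
`(a^{l⁽¹⁾})^{h⁽¹⁾} f(h⁽²⁾,l⁽²⁾) = f(h⁽¹⁾,l⁽¹⁾) a^{h⁽²⁾l⁽²⁾}`. -/
def IsTwistedModule (W : WeakAction k A H) (f : H →ₗ[k] H →ₗ[k] A) : Prop :=
  ∀ (h l : H) (a : A) (N₁ N₂ : ℕ) (u : Fin N₁ → Fin 2 → H) (v : Fin N₂ → Fin 2 → H),
    SRep k 1 h N₁ u → SRep k 1 l N₂ v →
    (∑ i, ∑ j, W.act (u i 0) (W.act (v j 0) a) * f (u i 1) (v j 1)) =
      ∑ i, ∑ j, f (u i 0) (v j 0) * W.act (u i 1 * v j 1) a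

variable (k A H) in
/-- A crossed product `E = A #_f H` of `A` by `H`:  a ring `E` identified with `A ⊗ H`
as a `k`-module, whose multiplication is given by the crossed product formula
`(a # h)(b # l) = a b^{h⁽¹⁾} f(h⁽²⁾,l⁽¹⁾) # h⁽³⁾ l⁽²⁾`. -/
structure CrossedProduct (E : Type) [Ring E] [Algebra k E] extends WeakAction k A H where
  f : H →ₗ[k] H →ₗ[k] A
  ι : (A ⊗[k] H) ≃ₗ[k] E
  ι_one : ι (1 ⊗ₜ[k] 1) = 1
  ι_mul : ∀ (a b : A) (h l : H) (N M : ℕ) (u : Fin N → Fin 3 → H) (v : Fin M → Fin 2 → H),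
    SRep k 2 h N u → SRep k 1 l M v →
    ι (a ⊗ₜ[k] h) * ι (b ⊗ₜ[k] l) =
      ∑ i, ∑ j, ι ((a * act (u i 0) b * f (u i 1) (v j 0)) ⊗ₜ[k] (u i 2 * v j 1))
  f_normal : IsNormal f
  f_cocycle : IsCocycle toWeakAction f
  f_twisted : IsTwistedModule toWeakAction f

namespace CrossedProduct

variable {E : Type} [Ring E] [Algebra k E] (S : CrossedProduct k A H E)

/-- The canonical map `A → E`, `a ↦ a # 1`. -/
def aE : A →ₗ[k] E := S.ι.toLinearMap ∘ₗ (TensorProduct.mk k A H).flip 1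

/-- The canonical map `H → E`, `h ↦ 1 # h`. -/
def hE : H →ₗ[k] E := S.ι.toLinearMap ∘ₗ (TensorProduct.mk k A H) 1

end CrossedProduct


/-- `IsConvInverse f g` says that `g` is the convolution inverse of `f` in the
convolution algebra `Hom_k(H ⊗ H, A)`, i.e. `f * g = g * f = ε ⊗ ε · 1_A`. -/
def IsConvInverse (f g : H →ₗ[k] H →ₗ[k] A) : Prop :=
  ∀ (h l : H) (N M : ℕ) (u : Fin N → Fin 2 → H) (v : Fin M → Fin 2 → H),
    SRep k 1 h N u → SRep k 1 l M v →
    (∑ i, ∑ j, f (u i 0) (v j 0) * g (u i 1) (v j 1)) =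
        (Coalgebra.counit (R := k) h * Coalgebra.counit (R := k) l) • (1 : A) ∧
    (∑ i, ∑ j, g (u i 0) (v j 0) * f (u i 1) (v j 1)) =
        (Coalgebra.counit (R := k) h * Coalgebra.counit (R := k) l) • (1 : A)

/-!
Write `j : A → E` for `a ↦ a # 1` and `γ⁻¹` for the proposed inverse. The product formula says
`γ(h) γ(l) = j(f(h⁽¹⁾, l⁽¹⁾)) γ(h⁽²⁾ l⁽²⁾)`, hence
`γ(h l) = j(f⁻¹(h⁽¹⁾, l⁽¹⁾)) γ(h⁽²⁾) γ(l⁽²⁾)`; evaluated at `S(h⁽¹⁾) ⊗ h⁽²⁾` this is `γ⁻¹ * γ = 1`.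

On the other side `(γ * γ⁻¹) * γ = γ`. Moreover `γ * γ⁻¹` takes values in `j(A)`: commuting `j`
past `γ` reduces this to `γ(h⁽¹⁾) γ(S(h⁽²⁾)) = j(f(h⁽¹⁾, S(h⁽²⁾)))`. Since `v` is recovered from
`(j ∘ v) * γ` by applying `a # h ↦ ε(h) a`, the only map into `j(A)` that fixes `γ` is the unit.
-/

open Coalgebra HopfAlgebra WithConv

section Bialgebra

variable {R C : Type*} [CommSemiring R] [Semiring C] [Bialgebra R C]

lemma comul_eq_includeLeft_convMul_includeRight :
    toConv (Bialgebra.comulAlgHom R C).toLinearMap =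
      toConv (Algebra.TensorProduct.includeLeft : C →ₐ[R] C ⊗[R] C).toLinearMap *
        toConv (Algebra.TensorProduct.includeRight : C →ₐ[R] C ⊗[R] C).toLinearMap := by
  ext x
  rw [(ℛ R x).convMul_apply]
  simp [(ℛ R x).eq]

lemma lTensor_mul'_comul_tmul (x y : C) :
    LinearMap.lTensor (C ⊗[R] C) (LinearMap.mul' R C) (comul (R := R) (x ⊗ₜ[R] y)) =
      LinearMap.rTensor C (Algebra.TensorProduct.includeLeft : C →ₐ[R] C ⊗[R] C).toLinearMap
          (comul x) *
        LinearMap.rTensor C (Algebra.TensorProduct.includeRight : C →ₐ[R] C ⊗[R] C).toLinearMap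
          (comul y) := by
  rw [TensorProduct.comul_tmul, ← (ℛ R x).eq, ← (ℛ R y).eq]
  simp only [TensorProduct.sum_tmul, TensorProduct.tmul_sum, map_sum, Finset.sum_mul_sum]
  rw [Finset.sum_comm]
  simp

end Bialgebra

section Antipode

variable {R C B : Type*} [CommSemiring R] [Semiring C] [HopfAlgebra R C] [Semiring B] [Algebra R B]

lemma algHom_convMul_comp_antipode (φ : C →ₐ[R] B) :
    toConv φ.toLinearMap * toConv (φ.toLinearMap ∘ₗ antipode R) = 1 := by
  ext x
  rw [(ℛ R x).convMul_apply]
  simp [← map_mul, ← map_sum, sum_mul_antipode_eq_algebraMap_counit]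

lemma algHom_comp_antipode_convMul (φ : C →ₐ[R] B) :
    toConv (φ.toLinearMap ∘ₗ antipode R) * toConv φ.toLinearMap = 1 := by
  ext x
  rw [(ℛ R x).convMul_apply]
  simp [← map_mul, ← map_sum, sum_antipode_mul_eq_algebraMap_counit]

lemma comp_antipode_eq_convMul {φ p q : C →ₐ[R] B}
    (h : toConv φ.toLinearMap = toConv p.toLinearMap * toConv q.toLinearMap) :
    toConv (φ.toLinearMap ∘ₗ antipode R) =
      toConv (q.toLinearMap ∘ₗ antipode R) * toConv (p.toLinearMap ∘ₗ antipode R) := by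
  apply left_inv_eq_right_inv (algHom_comp_antipode_convMul φ)
  rw [h, mul_assoc, ← mul_assoc (toConv q.toLinearMap), algHom_convMul_comp_antipode, one_mul,
    algHom_convMul_comp_antipode]

lemma comul_antipode (x : C) :
    comul (R := R) (antipode R x) =
      TensorProduct.comm R C C (TensorProduct.map (antipode R) (antipode R) (comul x)) := by
  have h := congr($(comp_antipode_eq_convMul
    (comul_eq_includeLeft_convMul_includeRight (R := R) (C := C))) x)
  rw [(ℛ R x).convMul_apply] at h
  simpa [← (ℛ R x).eq] using h

lemma comul_rTensor_antipode (y : C ⊗[R] C) :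
    comul (R := R) (LinearMap.rTensor C (antipode R) y) =
      TensorProduct.AlgebraTensorModule.tensorTensorTensorComm R R R R C C C C
        (LinearMap.rTensor (C ⊗[R] C)
          ((TensorProduct.comm R C C).toLinearMap ∘ₗ TensorProduct.map (antipode R) (antipode R))
          (TensorProduct.map comul comul y)) := by
  induction y using TensorProduct.induction_on with
  | zero => simp
  | add x y hx hy => simp only [map_add, hx, hy]
  | tmul x y => simp [TensorProduct.comul_tmul, comul_antipode]

-- Sweedler notation: `x⁽¹⁾ ⊗ S(x⁽⁴⁾) ⊗ x⁽²⁾ S(x⁽³⁾) = x⁽¹⁾ ⊗ S(x⁽²⁾) ⊗ 1`.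
open Algebra.TensorProduct in
lemma lTensor_mul'_comul_lTensor_antipode_comul (x : C) :
    LinearMap.lTensor (C ⊗[R] C) (LinearMap.mul' R C)
        (comul (R := R) (LinearMap.lTensor C (antipode R) (comul x))) =
      LinearMap.lTensor C (antipode R) (comul x) ⊗ₜ[R] (1 : C) := by
  let i₁ : C →ₐ[R] (C ⊗[R] C) ⊗[R] C := includeLeft.comp includeLeft
  let i₂ : C →ₐ[R] (C ⊗[R] C) ⊗[R] C :=
    (includeLeft (R := R) (S := R) (A := C ⊗[R] C) (B := C)).comp includeRight
  let i₃ : C →ₐ[R] (C ⊗[R] C) ⊗[R] C := includeRight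
  let d : C →ₐ[R] (C ⊗[R] C) ⊗[R] C :=
    (Algebra.TensorProduct.map includeRight (AlgHom.id R C)).comp (Bialgebra.comulAlgHom R C)
  have hd : toConv d.toLinearMap = toConv i₂.toLinearMap * toConv i₃.toLinearMap := by
    ext x
    rw [(ℛ R x).convMul_apply]
    simp [d, i₂, i₃, ← (ℛ R x).eq]
  have cancel :
      toConv i₁.toLinearMap * toConv i₃.toLinearMap * toConv (d.toLinearMap ∘ₗ antipode R) =
        toConv i₁.toLinearMap * toConv (i₂.toLinearMap ∘ₗ antipode R) := by
    rw [comp_antipode_eq_convMul hd, mul_assoc, ← mul_assoc (toConv i₃.toLinearMap),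
      algHom_convMul_comp_antipode, one_mul]
  have split (y z : C) :
      LinearMap.lTensor (C ⊗[R] C) (LinearMap.mul' R C) (comul (R := R) (y ⊗ₜ[R] z)) =
        (toConv i₁.toLinearMap * toConv i₃.toLinearMap) y * d z := by
    have hdz : d z = LinearMap.rTensor C (includeRight : C →ₐ[R] C ⊗[R] C).toLinearMap
        (comul z) := rfl
    have hy : LinearMap.rTensor C (includeLeft : C →ₐ[R] C ⊗[R] C).toLinearMap (comul y) =
        (toConv i₁.toLinearMap * toConv i₃.toLinearMap) y := by
      rw [(ℛ R y).convMul_apply]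
      simp [i₁, i₃, ← (ℛ R y).eq]
    rw [lTensor_mul'_comul_tmul, hdz, hy]
  have h := congr($cancel x)
  rw [(ℛ R x).convMul_apply, (ℛ R x).convMul_apply] at h
  simp only [← (ℛ R x).eq, map_sum, LinearMap.lTensor_tmul, split, TensorProduct.sum_tmul]
  simpa [i₁, i₂] using h

end Antipode

section Sweedler

variable {V : Type} [AddCommGroup V] [Module k V]

lemma exists_eq_sum_tp (n : ℕ) (x : Tpow k V (n + 1)) :
    ∃ (N : ℕ) (u : Fin N → Fin (n + 1) → V), x = ∑ i, tp k (u i) := by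
  induction n with
  | zero =>
    change V ⊗[k] k at x
    refine ⟨1, fun _ _ => TensorProduct.rid k V x, ?_⟩
    rw [Fin.sum_univ_one]
    exact ((TensorProduct.rid k V).symm_apply_apply x).symm
  | succ n ih =>
    change V ⊗[k] Tpow k V (n + 1) at x
    induction x using TensorProduct.induction_on with
    | zero => exact ⟨0, Fin.elim0, (Fin.sum_univ_zero _).symm⟩
    | tmul a y =>
      obtain ⟨N, u, rfl⟩ := ih y
      exact ⟨N, fun i => Fin.cons a (u i), TensorProduct.tmul_sum _ _ _⟩
    | add x y hx hy =>
      obtain ⟨N, u, hu⟩ := hx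
      obtain ⟨M, v, hv⟩ := hy
      refine ⟨N + M, Fin.append u v, ?_⟩
      rw [Fin.sum_univ_add]
      simp only [Fin.append_left, Fin.append_right]
      exact congr($hu + $hv)

variable [Coalgebra k V] {N : ℕ} {h : V}

lemma exists_sRep (n : ℕ) (h : V) : ∃ (N : ℕ) (u : Fin N → Fin (n + 1) → V), SRep k n h N u :=
  exists_eq_sum_tp n _

lemma sRep_one (n : ℕ) {C : Type} [Ring C] [Bialgebra k C] :
    SRep k n (1 : C) 1 (fun _ _ => 1) := by
  rw [SRep, Fin.sum_univ_one]
  induction n with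
  | zero => rfl
  | succ n ih =>
    have h : LinearMap.lTensor C (itComul k n) (comul (R := k) (1 : C)) =
        (1 : C) ⊗ₜ[k] itComul k n (1 : C) := by
      rw [Bialgebra.comul_one, Algebra.TensorProduct.one_def, LinearMap.lTensor_tmul]
    exact h.trans congr((1 : C) ⊗ₜ[k] $ih)

namespace SRep

lemma lTensor_comul {n : ℕ} {u : Fin N → Fin (n + 2) → V} (hu : SRep k (n + 1) h N u)
    {M : Type*} [AddCommGroup M] [Module k M] {d : V →ₗ[k] M} {g : (Fin (n + 1) → V) → M}
    (e : Tpow k V (n + 1) →ₗ[k] M) (hd : ∀ x, e (itComul k n x) = d x)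
    (hg : ∀ v, e (tp k v) = g v) :
    LinearMap.lTensor V d (comul h) = ∑ i, u i 0 ⊗ₜ[k] g fun j => u i j.succ := by
  have hu' : LinearMap.lTensor V (itComul k n) (comul h) =
      ∑ i, u i 0 ⊗ₜ[k] tp k fun j => u i j.succ := hu
  obtain rfl : e ∘ₗ itComul k n = d := LinearMap.ext hd
  simp [LinearMap.lTensor_comp_apply, hu', hg]

lemma comul_eq {u : Fin N → Fin 2 → V} (hu : SRep k 1 h N u) :
    comul (R := k) h = ∑ i, u i 0 ⊗ₜ[k] u i 1 := by
  have hrid (x : V) : TensorProduct.rid k V (x ⊗ₜ[k] 1) = x := by simp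
  simpa using hu.lTensor_comul (d := LinearMap.id) (g := fun v => v 0)
    (TensorProduct.rid k V).toLinearMap hrid (fun v => hrid (v 0))

lemma lTensor_comul_comul {u : Fin N → Fin 3 → V} (hu : SRep k 2 h N u) :
    LinearMap.lTensor V comul (comul (R := k) h) =
      ∑ i, u i 0 ⊗ₜ[k] (u i 1 ⊗ₜ[k] u i 2) := by
  let e := LinearMap.lTensor V (TensorProduct.rid k V).toLinearMap
  refine hu.lTensor_comul (g := fun v => v 0 ⊗ₜ[k] v 1) e (fun x => ?_) (fun v => ?_)
  · change e (LinearMap.lTensor V (TensorProduct.rid k V).symm.toLinearMap (comul x)) = _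
    simp [e, ← LinearMap.lTensor_comp_apply]
  · change e (v 0 ⊗ₜ[k] (v 1 ⊗ₜ[k] (1 : k))) = _
    simp [e]

lemma lTensor_lTensor_comul_comul_comul {u : Fin N → Fin 4 → V} (hu : SRep k 3 h N u) :
    LinearMap.lTensor V (LinearMap.lTensor V comul ∘ₗ comul) (comul (R := k) h) =
      ∑ i, u i 0 ⊗ₜ[k] (u i 1 ⊗ₜ[k] (u i 2 ⊗ₜ[k] u i 3)) := by
  let e := LinearMap.lTensor V (LinearMap.lTensor V (TensorProduct.rid k V).toLinearMap)
  refine hu.lTensor_comul (g := fun v => v 0 ⊗ₜ[k] (v 1 ⊗ₜ[k] v 2)) e (fun x => ?_) (fun v => ?_)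
  · change e (LinearMap.lTensor V
      (LinearMap.lTensor V (TensorProduct.rid k V).symm.toLinearMap ∘ₗ comul) (comul x)) = _
    simp [e, ← LinearMap.lTensor_comp_apply, ← LinearMap.comp_assoc, ← LinearMap.lTensor_comp]
  · change e (v 0 ⊗ₜ[k] (v 1 ⊗ₜ[k] (v 2 ⊗ₜ[k] (1 : k)))) = _
    simp [e]

lemma map_comul_comul_comul {u : Fin N → Fin 4 → V} (hu : SRep k 3 h N u) :
    TensorProduct.map comul comul (comul (R := k) h) =
      ∑ i, (u i 0 ⊗ₜ[k] u i 1) ⊗ₜ[k] (u i 2 ⊗ₜ[k] u i 3) := by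
  have coassoc : TensorProduct.map comul comul ∘ₗ comul (R := k) (A := V) =
      (TensorProduct.assoc k V V (V ⊗[k] V)).symm.toLinearMap ∘ₗ
        LinearMap.lTensor V (LinearMap.lTensor V comul ∘ₗ comul) ∘ₗ comul := by
    simp only [coassoc_simps]
  have := congr($coassoc h)
  simpa [hu.lTensor_lTensor_comul_comul_comul] using this

lemma rTensor_lTensor_comul_comul_comul {u : Fin N → Fin 4 → V} (hu : SRep k 3 h N u) :
    LinearMap.rTensor V (LinearMap.lTensor V comul ∘ₗ comul) (comul (R := k) h) =
      ∑ i, (u i 0 ⊗ₜ[k] (u i 1 ⊗ₜ[k] u i 2)) ⊗ₜ[k] u i 3 := by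
  have coassoc : LinearMap.rTensor V (LinearMap.lTensor V comul ∘ₗ comul) ∘ₗ
        comul (R := k) (A := V) =
      (LinearMap.rTensor V (TensorProduct.assoc k V V V).toLinearMap ∘ₗ
        (TensorProduct.assoc k (V ⊗[k] V) V V).symm.toLinearMap) ∘ₗ
        TensorProduct.map comul comul ∘ₗ comul := by
    simp only [coassoc_simps]
  have := congr($coassoc h)
  simpa [hu.map_comul_comul_comul] using this

lemma sum_counit_smul {u : Fin N → Fin 2 → V} (hu : SRep k 1 h N u) :
    ∑ i, counit (R := k) (u i 0) • u i 1 = h := by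
  simpa [hu.comul_eq] using
    congr(TensorProduct.lid k V $(rTensor_counit_comul (R := k) h))

lemma sum_counit_smul_tmul {u : Fin N → Fin 3 → V} (hu : SRep k 2 h N u) :
    ∑ i, counit (R := k) (u i 0) • (u i 1 ⊗ₜ[k] u i 2) = comul (R := k) h := by
  have comul_lid : (TensorProduct.lid k (V ⊗[k] V)).toLinearMap ∘ₗ
      LinearMap.rTensor (V ⊗[k] V) counit ∘ₗ LinearMap.lTensor V comul =
        comul (R := k) (A := V) ∘ₗ (TensorProduct.lid k V).toLinearMap ∘ₗ
          LinearMap.rTensor V counit := by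
    ext; simp
  have := congr($comul_lid (comul h))
  simp only [LinearMap.comp_apply, hu.lTensor_comul_comul, rTensor_counit_comul] at this
  simpa using this

lemma sum_tmul_counit_smul {u : Fin N → Fin 3 → V} (hu : SRep k 2 h N u) :
    ∑ i, u i 0 ⊗ₜ[k] (counit (R := k) (u i 1) • u i 2) = comul (R := k) h := by
  have counital : LinearMap.lTensor V ((TensorProduct.lid k V).toLinearMap ∘ₗ
      LinearMap.rTensor V counit) ∘ₗ LinearMap.lTensor V comul =
        (LinearMap.id : V ⊗[k] V →ₗ[k] V ⊗[k] V) := by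
    ext; simp
  simpa [hu.lTensor_comul_comul] using congr($counital (comul h))

lemma comul_rTensor_antipode_comul {C : Type} [Ring C] [HopfAlgebra k C] {h : C}
    {u : Fin N → Fin 4 → C} (hu : SRep k 3 h N u) :
    comul (R := k) (LinearMap.rTensor C (antipode k) (comul h)) =
      ∑ i, (antipode k (u i 1) ⊗ₜ[k] u i 2) ⊗ₜ[k] (antipode k (u i 0) ⊗ₜ[k] u i 3) := by
  simp [comul_rTensor_antipode, hu.map_comul_comul_comul]

end SRep

end Sweedler

namespace CrossedProduct

variable {E : Type} [Ring E] [Algebra k E] (S : CrossedProduct k A H E)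

lemma ι_tmul_one_mul (a b : A) (h : H) :
    S.ι (a ⊗ₜ[k] 1) * S.ι (b ⊗ₜ[k] h) = S.ι ((a * b) ⊗ₜ[k] h) := by
  obtain ⟨M, v, hv⟩ := exists_sRep (k := k) 1 h
  rw [S.ι_mul a b 1 h 1 M _ v (sRep_one 2) hv]
  conv_rhs => rw [← hv.sum_counit_smul]
  simp [S.one_act, (S.f_normal _).2, TensorProduct.tmul_sum, TensorProduct.smul_tmul']

/-- The canonical map `S.aE : A → E`, `a ↦ a # 1`, as an algebra homomorphism. -/
def aAlgHom : A →ₐ[k] E :=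
  AlgHom.ofLinearMap S.aE S.ι_one fun a b => (S.ι_tmul_one_mul a b 1).symm

lemma aAlgHom_apply (a : A) : S.aAlgHom a = S.ι (a ⊗ₜ[k] 1) := rfl

lemma hE_apply (h : H) : S.hE h = S.ι (1 ⊗ₜ[k] h) := rfl

lemma hE_one : S.hE 1 = 1 := S.ι_one

lemma ι_tmul (a : A) (h : H) : S.ι (a ⊗ₜ[k] h) = S.aAlgHom a * S.hE h := by
  rw [aAlgHom_apply, hE_apply, ι_tmul_one_mul, mul_one]

lemma mulRight_aAlgHom_comp_hE (b : A) :
    toConv (LinearMap.mulRight k (S.aAlgHom b) ∘ₗ S.hE) =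
      toConv (S.aAlgHom.toLinearMap ∘ₗ S.act.flip b) * toConv S.hE := by
  ext h
  obtain ⟨N, u, hu⟩ := exists_sRep (k := k) 2 h
  calc S.hE h * S.aAlgHom b
      = ∑ i, S.ι ((1 * S.act (u i 0) b * S.f (u i 1) 1) ⊗ₜ[k] (u i 2 * 1)) := by
        rw [hE_apply, aAlgHom_apply, S.ι_mul 1 b h 1 N 1 u _ hu (sRep_one 1)]
        simp only [Fin.sum_univ_one]
    _ = _ := by
        rw [LinearMap.convMul_apply, ← hu.sum_tmul_counit_smul]
        simp [(S.f_normal _).1, ← ι_tmul, ← TensorProduct.smul_tmul']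

lemma mul'_comp_map_hE_hE :
    toConv (LinearMap.mul' k E ∘ₗ TensorProduct.map S.hE S.hE) =
      toConv (S.aAlgHom.toLinearMap ∘ₗ TensorProduct.lift S.f) *
        toConv (S.hE ∘ₗ LinearMap.mul' k H) := by
  ext h l
  obtain ⟨N, u, hu⟩ := exists_sRep (k := k) 2 h
  obtain ⟨M, v, hv⟩ := exists_sRep (k := k) 1 l
  calc S.hE h * S.hE l
      = ∑ i, ∑ j, S.ι ((1 * S.act (u i 0) 1 * S.f (u i 1) (v j 0)) ⊗ₜ[k] (u i 2 * v j 1)) := by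
        rw [hE_apply, hE_apply, S.ι_mul 1 1 h l N M u v hu hv]
    _ = (toConv (S.aAlgHom.toLinearMap ∘ₗ TensorProduct.lift S.f) *
          toConv (S.hE ∘ₗ LinearMap.mul' k H)) (h ⊗ₜ[k] l) := by
        rw [LinearMap.convMul_apply, TensorProduct.comul_tmul, ← hu.sum_counit_smul_tmul,
          hv.comul_eq]
        simp only [TensorProduct.sum_tmul, TensorProduct.tmul_sum, map_sum]
        rw [Finset.sum_comm]
        simp only [← TensorProduct.smul_tmul', map_smul]
        simp [S.act_one, ι_tmul]

lemma hE_comp_mul' {finv : H →ₗ[k] H →ₗ[k] A}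
    (hfinv : toConv (TensorProduct.lift finv) * toConv (TensorProduct.lift S.f) = 1) :
    toConv (S.hE ∘ₗ LinearMap.mul' k H) =
      toConv (S.aAlgHom.toLinearMap ∘ₗ TensorProduct.lift finv) *
        toConv (LinearMap.mul' k E ∘ₗ TensorProduct.map S.hE S.hE) := by
  have cancel : toConv (S.aAlgHom.toLinearMap ∘ₗ TensorProduct.lift finv) *
      toConv (S.aAlgHom.toLinearMap ∘ₗ TensorProduct.lift S.f) = 1 := by
    have h := LinearMap.algHom_comp_convMul_distrib S.aAlgHom (toConv (TensorProduct.lift finv))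
      (toConv (TensorProduct.lift S.f))
    rw [hfinv] at h
    apply WithConv.ext
    rw [← h]
    ext; simp
  rw [mul'_comp_map_hE_hE, ← mul_assoc, cancel, one_mul]

lemma hE_convMul_hE_comp_antipode :
    toConv S.hE * toConv (S.hE ∘ₗ antipode k) =
      toConv (S.aAlgHom.toLinearMap ∘ₗ
        TensorProduct.lift S.f ∘ₗ LinearMap.lTensor H (antipode k) ∘ₗ comul) := by
  ext h
  have key := congr($(S.mul'_comp_map_hE_hE) (LinearMap.lTensor H (antipode k) (comul h)))
  have factor : TensorProduct.map (S.aAlgHom.toLinearMap ∘ₗ TensorProduct.lift S.f)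
      (S.hE ∘ₗ LinearMap.mul' k H) =
        TensorProduct.map (S.aAlgHom.toLinearMap ∘ₗ TensorProduct.lift S.f) S.hE ∘ₗ
          LinearMap.lTensor (H ⊗[k] H) (LinearMap.mul' k H) := by
    rw [LinearMap.map_comp_lTensor]
  rw [LinearMap.convMul_apply, factor, LinearMap.comp_apply _ (LinearMap.lTensor _ _),
    lTensor_mul'_comul_lTensor_antipode_comul] at key
  rw [LinearMap.convMul_apply, ← LinearMap.map_comp_lTensor]
  simpa [hE_one] using key

/-- The map `h ↦ θ(h⁽²⁾) # S(h⁽¹⁾)` from `H` to `A #_f H`. -/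
def antipodeSmash (θ : H →ₗ[k] A) : H →ₗ[k] E :=
  S.ι.toLinearMap ∘ₗ TensorProduct.map θ (antipode k) ∘ₗ
    (TensorProduct.comm k H H).toLinearMap ∘ₗ comul

lemma antipodeSmash_apply (θ : H →ₗ[k] A) {h : H} {I : Type*} (𝓡 : Coalgebra.Repr k h I) :
    S.antipodeSmash θ h =
      ∑ i ∈ 𝓡.index, S.aAlgHom (θ (𝓡.right i)) * S.hE (antipode k (𝓡.left i)) := by
  simp [antipodeSmash, ← 𝓡.eq, ι_tmul]

lemma mulRight_comp_hE_convMul_hE_comp_antipode_mem_range (b : A) (h : H) :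
    (toConv (LinearMap.mulRight k (S.aAlgHom b) ∘ₗ S.hE) * toConv (S.hE ∘ₗ antipode k)) h ∈
      S.aAlgHom.range := by
  rw [mulRight_aAlgHom_comp_hE, mul_assoc, hE_convMul_hE_comp_antipode]
  exact ⟨_, congr($(LinearMap.algHom_comp_convMul_distrib S.aAlgHom (toConv (S.act.flip b))
    (toConv _)) h)⟩

lemma hE_convMul_antipodeSmash_mem_range (θ : H →ₗ[k] A) (h : H) :
    (toConv S.hE * toConv (S.antipodeSmash θ)) h ∈ S.aAlgHom.range := by
  let Ω : H ⊗[k] (H ⊗[k] H) →ₗ[k] E := LinearMap.mul' k E ∘ₗ TensorProduct.map S.hE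
    (S.ι.toLinearMap ∘ₗ TensorProduct.map θ (antipode k) ∘ₗ
      (TensorProduct.comm k H H).toLinearMap)
  have hΩ (x y z : H) :
      Ω (x ⊗ₜ (y ⊗ₜ z)) = S.hE x * S.aAlgHom (θ z) * S.hE (antipode k y) := by
    simp [Ω, ι_tmul, mul_assoc]
  let r := ℛ k h
  have coassoc := congr(Ω $(sum_tmul_tmul_eq r (fun i => ℛ k (r.left i))
    (fun i => ℛ k (r.right i))))
  simp only [map_sum, hΩ, mul_assoc] at coassoc
  have expand : (toConv S.hE * toConv (S.antipodeSmash θ)) h =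
      ∑ i ∈ r.index, (toConv (LinearMap.mulRight k (S.aAlgHom (θ (r.right i))) ∘ₗ S.hE) *
        toConv (S.hE ∘ₗ antipode k)) (r.left i) := by
    simp [r.convMul_apply, (ℛ k (r.left _)).convMul_apply, coassoc,
      S.antipodeSmash_apply θ (ℛ k (r.right _)), Finset.mul_sum, mul_assoc]
  rw [expand]
  exact sum_mem fun i _ => S.mulRight_comp_hE_convMul_hE_comp_antipode_mem_range _ _

/-- The candidate inverse `h ↦ f⁻¹(S(h⁽²⁾), h⁽³⁾) # S(h⁽¹⁾)` of `h ↦ 1 # h`. -/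
def smashInv (finv : H →ₗ[k] H →ₗ[k] A) : H →ₗ[k] E :=
  S.antipodeSmash (TensorProduct.lift finv ∘ₗ LinearMap.rTensor H (antipode k) ∘ₗ comul)

lemma smashInv_eq_comp (finv : H →ₗ[k] H →ₗ[k] A) :
    S.smashInv finv =
      (S.ι.toLinearMap ∘ₗ
        TensorProduct.map (TensorProduct.lift finv ∘ₗ LinearMap.rTensor H (antipode k))
          (antipode k) ∘ₗ (TensorProduct.comm k H (H ⊗[k] H)).toLinearMap) ∘ₗ
        LinearMap.lTensor H comul ∘ₗ comul := by
  have naturality : TensorProduct.map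
        (TensorProduct.lift finv ∘ₗ LinearMap.rTensor H (antipode k) ∘ₗ comul) (antipode k) ∘ₗ
          (TensorProduct.comm k H H).toLinearMap =
      TensorProduct.map (TensorProduct.lift finv ∘ₗ LinearMap.rTensor H (antipode k))
        (antipode k) ∘ₗ (TensorProduct.comm k H (H ⊗[k] H)).toLinearMap ∘ₗ
          LinearMap.lTensor H comul := by
    ext; simp
  ext h
  exact congr(S.ι ($naturality (comul h)))

lemma hE_convMul_smashInv_apply (finv : H →ₗ[k] H →ₗ[k] A) {h : H} {N : ℕ}
    {u : Fin N → Fin 4 → H} (hu : SRep k 3 h N u) :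
    (toConv S.hE * toConv (S.smashInv finv)) h =
      ∑ i, S.ι (1 ⊗ₜ[k] u i 0) *
        S.ι (finv (antipode k (u i 2)) (u i 3) ⊗ₜ[k] antipode k (u i 1)) := by
  rw [LinearMap.convMul_apply, smashInv_eq_comp, ← LinearMap.map_comp_lTensor,
    LinearMap.comp_apply, hu.lTensor_lTensor_comul_comul_comul]
  simp [hE_apply]

lemma smashInv_convMul_hE_apply (finv : H →ₗ[k] H →ₗ[k] A) {h : H} {N : ℕ}
    {u : Fin N → Fin 4 → H} (hu : SRep k 3 h N u) :
    (toConv (S.smashInv finv) * toConv S.hE) h =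
      ∑ i, S.ι (finv (antipode k (u i 1)) (u i 2) ⊗ₜ[k] antipode k (u i 0)) *
        S.ι (1 ⊗ₜ[k] u i 3) := by
  rw [LinearMap.convMul_apply, smashInv_eq_comp, ← LinearMap.map_comp_rTensor,
    LinearMap.comp_apply, hu.rTensor_lTensor_comul_comul_comul]
  simp [hE_apply]

theorem smashInv_convMul_hE {finv : H →ₗ[k] H →ₗ[k] A}
    (hfinv : toConv (TensorProduct.lift finv) * toConv (TensorProduct.lift S.f) = 1) :
    toConv (S.smashInv finv) * toConv S.hE = 1 := by
  ext h
  obtain ⟨N, u, hu⟩ := exists_sRep (k := k) 3 h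
  have key := congr($(S.hE_comp_mul' hfinv) (LinearMap.rTensor H (antipode k) (comul h)))
  rw [LinearMap.convMul_apply, hu.comul_rTensor_antipode_comul] at key
  simp only [LinearMap.comp_apply, mul_antipode_rTensor_comul_apply] at key
  rw [S.smashInv_convMul_hE_apply finv hu, LinearMap.convOne_apply]
  simpa [ι_tmul, hE_one, mul_assoc, Algebra.algebraMap_eq_smul_one] using key.symm

/-- The projection `a # h ↦ ε(h) a` of `A #_f H` onto `A`. -/
def counitProj : E →ₗ[k] A :=
  (TensorProduct.rid k A).toLinearMap ∘ₗ LinearMap.lTensor A counit ∘ₗ S.ι.symm.toLinearMap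

lemma counitProj_aAlgHom_mul_hE (a : A) (h : H) :
    S.counitProj (S.aAlgHom a * S.hE h) = counit (R := k) h • a := by
  simp [counitProj, ← ι_tmul]

lemma counitProj_aAlgHom (a : A) : S.counitProj (S.aAlgHom a) = a := by
  simpa [hE_one] using S.counitProj_aAlgHom_mul_hE a 1

lemma counitProj_comp_convMul_hE (v : H →ₗ[k] A) :
    S.counitProj ∘ₗ (toConv (S.aAlgHom.toLinearMap ∘ₗ v) * toConv S.hE).ofConv = v := by
  ext h
  have counital : ∑ i ∈ (ℛ k h).index, counit (R := k) ((ℛ k h).right i) • (ℛ k h).left i = h := by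
    simpa only [map_sum, TensorProduct.rid_tmul, one_smul] using
      congr(TensorProduct.rid k H $(sum_tmul_counit_eq (ℛ k h)))
  conv_rhs => rw [← counital]
  simp [(ℛ k h).convMul_apply, counitProj_aAlgHom_mul_hE]

lemma eq_one_of_convMul_hE_eq_hE {w : WithConv (H →ₗ[k] E)}
    (hw : ∀ h, w h ∈ S.aAlgHom.range) (h : w * toConv S.hE = toConv S.hE) : w = 1 := by
  let v : H →ₗ[k] A := S.counitProj ∘ₗ w.ofConv
  have w_eq : w = toConv (S.aAlgHom.toLinearMap ∘ₗ v) := by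
    ext x
    obtain ⟨a, ha⟩ := hw x
    change w x = S.aAlgHom (S.counitProj (w x))
    rw [← ha]
    exact congr(S.aAlgHom $(S.counitProj_aAlgHom a)).symm
  have v_apply (x : H) : v x = counit (R := k) x • (1 : A) := by
    rw [← S.counitProj_comp_convMul_hE v, ← w_eq, h]
    simpa using S.counitProj_aAlgHom_mul_hE 1 x
  rw [w_eq]
  ext x
  simp [v_apply, Algebra.algebraMap_eq_smul_one]

theorem hE_convMul_smashInv {finv : H →ₗ[k] H →ₗ[k] A}
    (hfinv : toConv (TensorProduct.lift finv) * toConv (TensorProduct.lift S.f) = 1) :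
    toConv S.hE * toConv (S.smashInv finv) = 1 := by
  refine S.eq_one_of_convMul_hE_eq_hE (S.hE_convMul_antipodeSmash_mem_range _) ?_
  rw [mul_assoc, S.smashInv_convMul_hE hfinv, mul_one]

end CrossedProduct

lemma IsConvInverse.lift_convMul_lift {f g : H →ₗ[k] H →ₗ[k] A} (h : IsConvInverse f g) :
    toConv (TensorProduct.lift g) * toConv (TensorProduct.lift f) = 1 := by
  ext x y
  obtain ⟨N, u, hu⟩ := exists_sRep (k := k) 1 x
  obtain ⟨M, v, hv⟩ := exists_sRep (k := k) 1 y
  simp only [TensorProduct.AlgebraTensorModule.curry_apply, LinearMap.restrictScalars_self,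
    TensorProduct.curry_apply]
  rw [LinearMap.convMul_apply, TensorProduct.comul_tmul, hu.comul_eq, hv.comul_eq,
    LinearMap.convOne_apply]
  simp only [TensorProduct.sum_tmul, TensorProduct.tmul_sum, map_sum]
  rw [Finset.sum_comm]
  simpa [Algebra.algebraMap_eq_smul_one, mul_comm, mul_smul] using (h x y N M u v hu hv).2

theorem conv_invertible_one_smash_general
    {k A H E : Type} [CommRing k] [Ring A] [Algebra k A] [Ring H] [HopfAlgebra k H]
    [Ring E] [Algebra k E] (S : CrossedProduct k A H E)
    (finv : H →ₗ[k] H →ₗ[k] A)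
    (hfinv : toConv (TensorProduct.lift finv) * toConv (TensorProduct.lift S.f) = 1) :
    ∀ (h : H) (N : ℕ) (u : Fin N → Fin 4 → H), SRep k 3 h N u →
      (∑ i, S.ι ((1 : A) ⊗ₜ[k] u i 0) *
          S.ι ((finv (antipode k (u i 2)) (u i 3)) ⊗ₜ[k] antipode k (u i 1)) =
        counit (R := k) h • (1 : E)) ∧
      (∑ i, S.ι ((finv (antipode k (u i 1)) (u i 2)) ⊗ₜ[k] antipode k (u i 0)) *
          S.ι ((1 : A) ⊗ₜ[k] u i 3) =
        counit (R := k) h • (1 : E)) := by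
  intro h N u hu
  rw [← S.hE_convMul_smashInv_apply finv hu, ← S.smashInv_convMul_hE_apply finv hu,
    S.hE_convMul_smashInv hfinv, S.smashInv_convMul_hE hfinv, LinearMap.convOne_apply,
    Algebra.algebraMap_eq_smul_one]
  exact ⟨rfl, rfl⟩

/-- **Convolution invertibility of `h ↦ 1 # h`.**
Let `E = A #_f H` be a crossed product with convolution invertible cocycle `f`
(with convolution inverse `f⁻¹`).  Then the map `γ : H → E`, `γ(h) = 1 # h`, is
convolution invertible in `Hom_k(H, E)`, with convolution inverse
`γ⁻¹(h) = (1 # h)⁻¹ = f⁻¹(S(h⁽²⁾), h⁽³⁾) # S(h⁽¹⁾)`; that is,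
`γ(h⁽¹⁾) γ⁻¹(h⁽²⁾) = γ⁻¹(h⁽¹⁾) γ(h⁽²⁾) = ε(h) · (1 # 1)` for all `h ∈ H`. -/
theorem conv_invertible_one_smash
    {k A H E : Type} [CommRing k] [Ring A] [Algebra k A] [Ring H] [HopfAlgebra k H]
    [Ring E] [Algebra k E] (S : CrossedProduct k A H E)
    (finv : H →ₗ[k] H →ₗ[k] A) (hfinv : IsConvInverse S.f finv) :
    ∀ (h : H) (N : ℕ) (u : Fin N → Fin 4 → H), SRep k 3 h N u →
      (∑ i, S.ι ((1 : A) ⊗ₜ[k] u i 0) *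
          S.ι ((finv (HopfAlgebra.antipode (R := k) (u i 2)) (u i 3)) ⊗ₜ[k]
            HopfAlgebra.antipode (R := k) (u i 1)) =
        Coalgebra.counit (R := k) h • (1 : E)) ∧
      (∑ i, S.ι ((finv (HopfAlgebra.antipode (R := k) (u i 1)) (u i 2)) ⊗ₜ[k]
            HopfAlgebra.antipode (R := k) (u i 0)) *
          S.ι ((1 : A) ⊗ₜ[k] u i 3) =
        Coalgebra.counit (R := k) h • (1 : E)) := by
  exact conv_invertible_one_smash_general S finv hfinv.lift_convMul_lift

end HopfCrossed
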